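/- arXiv:1408.6683 — 4 statements merged into one kernel-verified Lean document; each statement's English description precedes it below -/
import Mathlib

section
/- Let d, n be natural numbers, let w₁, …, w_d ∈ ℤ^n and τ ∈ ℤ^n, and assume that the set S := {α ∈ ℕ^d : ∑_{ν=1}^d α_ν w_ν = τ} is finite. Then: (a) every entire function f : ℂ^d → ℂ (complex differentiable everywhere) satisfying f(t^{w₁}z₁, …, t^{w_d}z_d) = t^τ·f(z) for all t ∈ (ℂ^×)^n and all z ∈ ℂ^d is a ℂ-linear combination of the monomial functions z ↦ ∏_ν z_ν^{α_ν} with α ∈ S; and (b) the ℂ-vector space of all such entire functions has dimension equal to the cardinality of S. -/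
/-!
The proof of the spanning statement is by induction on the number `d` of variables, and so needs no
Taylor expansion in several variables. Expand an entire equivariant `f` in its first variable alone:
`f(ζ, y) = ∑ k, ζ^k c_k(y) / k!`, where `c_k(y)` is the `k`-th derivative of `f(·, y)` at `0`.

* Each `c_k` is entire (`differentiable_iteratedDeriv_cons`), since Cauchy's formula writes it as an
  integral over the unit circle which depends holomorphically on `y`
  (`differentiable_integral_param`).
* Equivariance of `f` gives `(t^{w₀})^k c_k(t^{w'} y) = t^τ c_k(y)`, so `c_k` is equivariant with
  weight `τ - k w₀` for the remaining weights `w'`.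
* The multi-indices of weight `τ - k w₀` for `w'` correspond to the multi-indices of weight `τ` with
  first entry `k`. They are therefore finite in number, so the induction hypothesis applies to
  `c_k`; and they exist for finitely many `k` only, so all but finitely many `c_k` vanish.

Hence the expansion is a finite sum of terms in the span. For `d = 0` a nonzero constant is
equivariant only if `t^τ = 1` for all `t`, that is, `τ = 0`.

Conversely every monomial of weight `τ` is entire and equivariant, so the space in question is the
span of these monomials; its dimension is their number because distinct monomials are linearly
independent as functions on `ℂ^d`, polynomials over an infinite field being determined by their
values.
-/

open scoped BigOperators

/-- `t^a = ∏ i, (t i)^(a i)` for `t ∈ (ℂ^×)^n` and `a ∈ ℤ^n`. -/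
noncomputable def torusPow {n : ℕ} (t : Fin n → ℂˣ) (a : Fin n → ℤ) : ℂ :=
  ∏ i, ((t i : ℂ) ^ (a i))

open MeasureTheory in
/-- Holomorphic dependence of an integral on parameters. The domination needed to differentiate
under the integral sign comes from the Schwarz lemma: `f` is bounded on a compact neighbourhood of
the points `γ θ + L y` involved, hence `fderiv ℂ f` is bounded at these points. -/
theorem differentiable_integral_param {H E : Type*} [NormedAddCommGroup H] [NormedSpace ℂ H]
    [ProperSpace H] [NormedAddCommGroup E] [NormedSpace ℂ E] [FiniteDimensional ℂ E]
    [MeasurableSpace E] [BorelSpace E]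
    {f : E → ℂ} (hf : Differentiable ℂ f) (L : H →L[ℂ] E) {γ : ℝ → E} (hγ : Continuous γ)
    {κ : ℝ → ℂ} (hκ : Continuous κ) (a b : ℝ) :
    Differentiable ℂ fun y => ∫ θ in a..b, κ θ • f (γ θ + L y) := by
  intro y₀
  have : ProperSpace E := FiniteDimensional.proper ℂ E
  have : FiniteDimensional ℂ (E →L[ℂ] ℂ) := inferInstance
  have : ProperSpace (E →L[ℂ] ℂ) := FiniteDimensional.proper ℂ _
  set K : Set E := (fun p : ℝ × H => γ p.1 + L p.2) '' (Set.uIcc a b ×ˢ Metric.closedBall y₀ 1)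
    with hK
  have hKc : IsCompact (Metric.cthickening 1 K) :=
    ((isCompact_uIcc.prod (isCompact_closedBall y₀ 1)).image (by fun_prop)).cthickening
  obtain ⟨M, hM⟩ := hKc.exists_bound_of_continuousOn hf.continuous.continuousOn
  -- `|f p| ≤ M` and `|f| ≤ M` on the unit ball around `p`, so `f` maps it into a disc of radius `2M`
  -- around `f p`.
  have hder : ∀ p ∈ K, ‖fderiv ℂ f p‖ ≤ 2 * M := by
    intro p hp
    have hmaps : Set.MapsTo f (Metric.ball p 1) (Metric.closedBall (f p) (2 * M)) := by
      intro q hq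
      have h1 := hM q (Metric.mem_cthickening_of_dist_le q p 1 K hp (Metric.mem_ball.1 hq).le)
      have h2 := hM p (Metric.self_subset_cthickening K hp)
      rw [Metric.mem_closedBall, dist_eq_norm]
      linarith [norm_sub_le (f q) (f p)]
    simpa using Complex.norm_fderiv_le_div_of_mapsTo_ball hf.differentiableOn hmaps one_pos
  have hcont : ∀ y, Continuous fun θ => κ θ • f (γ θ + L y) := fun y => by
    have := hf.continuous
    fun_prop
  refine (intervalIntegral.hasFDerivAt_integral_of_dominated_of_fderiv_le
    (F' := fun y θ => κ θ • (fderiv ℂ f (γ θ + L y)).comp L)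
    (bound := fun θ => ‖κ θ‖ * (2 * M * ‖L‖)) (Metric.ball_mem_nhds y₀ one_pos)
    (Filter.Eventually.of_forall fun y => (hcont y).aestronglyMeasurable)
    ((hcont y₀).intervalIntegrable a b) ?_ (Filter.Eventually.of_forall ?_)
    (Continuous.intervalIntegrable (by fun_prop) a b)
    (Filter.Eventually.of_forall ?_)).differentiableAt
  · have h1 : StronglyMeasurable fun θ => fderiv ℂ f (γ θ + L y₀) :=
      ((measurable_fderiv ℂ f).comp
        (hγ.add continuous_const).measurable).stronglyMeasurable
    have h2 : Continuous fun A : E →L[ℂ] ℂ => A.comp L := by fun_prop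
    exact (hκ.stronglyMeasurable.smul (h2.comp_stronglyMeasurable h1)).aestronglyMeasurable
  · intro θ hθ y hy
    rw [norm_smul]
    gcongr
    refine (ContinuousLinearMap.opNorm_comp_le _ _).trans ?_
    gcongr
    exact hder _ ⟨(θ, y), ⟨Set.uIoc_subset_uIcc hθ, Metric.ball_subset_closedBall hy⟩, rfl⟩
  · intro θ _ y _
    exact ((hf _).hasFDerivAt.comp y (L.hasFDerivAt.const_add (γ θ))).const_smul (κ θ)

theorem differentiable_cons {d : ℕ} {f : (Fin (d + 1) → ℂ) → ℂ} (hf : Differentiable ℂ f)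
    (y : Fin d → ℂ) : Differentiable ℂ fun ζ : ℂ => f (Fin.cons ζ y) :=
  hf.comp <| differentiable_pi.2 fun i => by
    refine Fin.cases ?_ (fun j => ?_) i <;> simp

/-- The Taylor coefficients of an entire function in its first variable are entire functions of the
remaining variables: by Cauchy's formula they are integrals over the unit circle in the first
variable. -/
theorem differentiable_iteratedDeriv_cons {d : ℕ} {f : (Fin (d + 1) → ℂ) → ℂ}
    (hf : Differentiable ℂ f) (k : ℕ) :
    Differentiable ℂ fun y : Fin d → ℂ => iteratedDeriv k (fun ζ => f (Fin.cons ζ y)) 0 := by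
  let L : (Fin d → ℂ) →L[ℂ] (Fin (d + 1) → ℂ) :=
    ContinuousLinearMap.pi (Fin.cons 0 fun i => ContinuousLinearMap.proj i)
  have hL : ∀ (ζ : ℂ) (y : Fin d → ℂ), Fin.cons ζ y = Pi.single 0 ζ + L y := by
    intro ζ y
    funext i
    refine Fin.cases ?_ (fun j => ?_) i <;> simp [L]
  have key : ∀ y : Fin d → ℂ, iteratedDeriv k (fun ζ => f (Fin.cons ζ y)) 0
      = (2 * Real.pi * Complex.I / k.factorial)⁻¹ * ∫ θ in (0 : ℝ)..2 * Real.pi,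
        (deriv (circleMap 0 1) θ * (1 / (circleMap 0 1 θ) ^ (k + 1))) •
          f (Pi.single 0 (circleMap 0 1 θ) + L y) := by
    intro y
    have h := Complex.circleIntegral_one_div_sub_center_pow_smul_of_differentiable_on_off_countable
      (f := fun ζ => f (Fin.cons ζ y)) (c := 0) one_pos k Set.countable_empty
      (differentiable_cons hf y).continuous.continuousOn
      (fun ζ _ => differentiable_cons hf y ζ)
    simp only [circleIntegral, sub_zero, hL, smul_eq_mul, ← mul_assoc] at h
    simp only [hL, smul_eq_mul, h]
    rw [inv_mul_cancel_left₀]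
    simp [Real.pi_ne_zero, Nat.factorial_ne_zero]
  simp only [key]
  refine (differentiable_integral_param hf L
    (γ := fun θ => Pi.single 0 (circleMap 0 1 θ)) ?_ ?_ _ _).const_mul _
  · exact (continuous_single 0).comp (continuous_circleMap 0 1)
  · simp only [deriv_circleMap]
    refine ((continuous_circleMap 0 1).mul continuous_const).mul
      (continuous_const.div ((continuous_circleMap 0 1).pow _) fun θ => ?_)
    simp [circleMap]


theorem torusPow_mul_torusPow_sub {n : ℕ} (t : Fin n → ℂˣ) (a τ : Fin n → ℤ) (k : ℕ) :
    torusPow t a ^ k * torusPow t (fun i => τ i - k * a i) = torusPow t τ := by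
  unfold torusPow
  rw [← Finset.prod_pow, ← Finset.prod_mul_distrib]
  refine Finset.prod_congr rfl fun i _ => ?_
  rw [← zpow_natCast, ← zpow_mul, ← zpow_add₀ (t i).ne_zero]
  congr 1
  ring

theorem prod_torusPow_pow {d n : ℕ} (t : Fin n → ℂˣ) (w : Fin d → Fin n → ℤ) (α : Fin d → ℕ) :
    ∏ ν, torusPow t (w ν) ^ α ν = torusPow t fun i => ∑ ν, (α ν : ℤ) * w ν i := by
  unfold torusPow
  simp only [← Finset.prod_pow]
  rw [Finset.prod_comm]
  refine Finset.prod_congr rfl fun i _ => ?_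
  induction (Finset.univ : Finset (Fin d)) using Finset.cons_induction with
  | empty => simp
  | cons ν s hν ih =>
    rw [Finset.prod_cons, Finset.sum_cons, zpow_add₀ (t i).ne_zero, ih, mul_comm (α ν : ℤ),
      zpow_mul, zpow_natCast]

theorem torusPow_ne_zero {n : ℕ} (t : Fin n → ℂˣ) (a : Fin n → ℤ) : torusPow t a ≠ 0 :=
  Finset.prod_ne_zero_iff.2 fun i _ => zpow_ne_zero _ (t i).ne_zero

theorem eq_zero_of_torusPow_eq_one {n : ℕ} {τ : Fin n → ℤ} (h : ∀ t, torusPow t τ = 1) :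
    τ = 0 := by
  funext i
  -- With `t i = 2` and the other entries `1`, the hypothesis reads `2 ^ τ i = 1`.
  have h2 := h (Function.update 1 i (Units.mk0 2 two_ne_zero))
  unfold torusPow at h2
  rw [Finset.prod_eq_single i (fun j _ hj => by simp [hj]) (by simp)] at h2
  simp only [Function.update_self, Units.val_mk0] at h2
  have h3 := congrArg norm h2
  rw [norm_zpow, norm_one, Complex.norm_two] at h3
  exact (zpow_eq_one_iff_right₀ (by norm_num) (by norm_num)).1 h3

/-- The multi-indices `α ∈ ℕ^d` of weight `τ`, i.e. with `∑ ν, α_ν w_ν = τ`. -/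
def weightSet {d n : ℕ} (w : Fin d → Fin n → ℤ) (τ : Fin n → ℤ) : Set (Fin d → ℕ) :=
  {α | ∀ i, ∑ ν, (α ν : ℤ) * w ν i = τ i}

/-- The monomial functions `z ↦ z^α` on `ℂ^d` of weight `τ`. -/
def weightMonomials {d n : ℕ} (w : Fin d → Fin n → ℤ) (τ : Fin n → ℤ) :
    Set ((Fin d → ℂ) → ℂ) :=
  {g | ∃ α ∈ weightSet w τ, g = fun z => ∏ ν, z ν ^ α ν}

/-- Splitting off the first exponent `k` of a multi-index of weight `τ` leaves a multi-index of
weight `τ - k w₀` for the remaining weights. -/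
theorem cons_mem_weightSet {d n : ℕ} (w : Fin (d + 1) → Fin n → ℤ) (τ : Fin n → ℤ) (k : ℕ)
    (β : Fin d → ℕ) : (Fin.cons k β : Fin (d + 1) → ℕ) ∈ weightSet w τ ↔
      β ∈ weightSet (fun ν => w ν.succ) fun i => τ i - k * w 0 i := by
  simp only [weightSet, Set.mem_ofPred_eq, Fin.sum_univ_succ, Fin.cons_zero, Fin.cons_succ]
  exact forall_congr' fun i => eq_sub_iff_add_eq'.symm

theorem pow_mul_mem_span {d n : ℕ} (w : Fin (d + 1) → Fin n → ℤ) (τ : Fin n → ℤ) (k : ℕ)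
    {g : (Fin d → ℂ) → ℂ}
    (hg : g ∈ Submodule.span ℂ
      (weightMonomials (fun ν => w ν.succ) fun i => τ i - k * w 0 i)) :
    (fun z : Fin (d + 1) → ℂ => z 0 ^ k * g (Fin.tail z)) ∈
      Submodule.span ℂ (weightMonomials w τ) := by
  induction hg using Submodule.span_induction with
  | mem g hg =>
    obtain ⟨β, hβ, rfl⟩ := hg
    refine Submodule.subset_span ⟨Fin.cons k β, (cons_mem_weightSet w τ k β).2 hβ, ?_⟩
    funext z
    simp [Fin.prod_univ_succ, Fin.tail]
  | zero =>
    convert Submodule.zero_mem (Submodule.span ℂ (weightMonomials w τ)) using 1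
    funext z
    simp
  | add g h _ _ ihg ihh =>
    convert Submodule.add_mem _ ihg ihh using 1
    funext z
    simp [mul_add]
  | smul c g _ ih =>
    convert Submodule.smul_mem _ c ih using 1
    funext z
    simp [mul_left_comm]

/-- Equivariant entire functions are combinations of the monomials of the right weight, by
induction on the number of variables. -/
theorem mem_span_of_equivariant {d n : ℕ} (w : Fin d → Fin n → ℤ) (τ : Fin n → ℤ)
    (hS : (weightSet w τ).Finite) {f : (Fin d → ℂ) → ℂ} (hf : Differentiable ℂ f)
    (heq : ∀ (t : Fin n → ℂˣ) (z : Fin d → ℂ),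
      f (fun ν => torusPow t (w ν) * z ν) = torusPow t τ * f z) :
    f ∈ Submodule.span ℂ (weightMonomials w τ) := by
  induction d generalizing τ with
  | zero =>
    have hf0 : f = fun _ => f 0 := funext fun z => congrArg f (Subsingleton.elim _ _)
    by_cases h0 : f 0 = 0
    · rw [hf0, h0]
      exact Submodule.zero_mem _
    · have hτ : τ = 0 := eq_zero_of_torusPow_eq_one fun t => by
        have h := heq t 0
        rw [Subsingleton.elim (fun ν => torusPow t (w ν) * (0 : Fin 0 → ℂ) ν) 0] at h
        exact (mul_eq_right₀ h0).1 h.symm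
      have h1 : (fun _ => 1 : (Fin 0 → ℂ) → ℂ) ∈ Submodule.span ℂ (weightMonomials w τ) :=
        Submodule.subset_span ⟨0, by simp [weightSet, hτ], by simp⟩
      convert Submodule.smul_mem _ (f 0) h1 using 1
      rw [hf0]
      simp [Pi.smul_def]
  | succ d ih =>
    set c : ℕ → (Fin d → ℂ) → ℂ :=
      fun k y => iteratedDeriv k (fun ζ => f (Fin.cons ζ y)) 0 with hc
    have hc_span : ∀ k : ℕ, c k ∈ Submodule.span ℂ
        (weightMonomials (fun ν => w ν.succ) fun i => τ i - k * w 0 i) := by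
      intro k
      refine ih _ _ ?_ (differentiable_iteratedDeriv_cons hf k) fun t y => ?_
      · refine (hS.preimage (f := fun β : Fin d → ℕ => (Fin.cons k β : Fin (d + 1) → ℕ))
          (Fin.cons_right_injective (α := fun _ => ℕ) k).injOn).subset fun β hβ => ?_
        exact (cons_mem_weightSet w τ k β).2 hβ
      · have hline : (fun ζ => f (Fin.cons (torusPow t (w 0) * ζ)
            fun ν => torusPow t (w ν.succ) * y ν)) =
            fun ζ => torusPow t τ * f (Fin.cons ζ y) := by
          funext ζ
          rw [← heq]
          congr 1
          funext i
          refine Fin.cases ?_ (fun j => ?_) i <;> simp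
        -- Comparing `k`-th derivatives at `ζ = 0` produces the factor `(t^{w₀})^k` on the left.
        have h := congrFun (congrArg (iteratedDeriv k) hline) 0
        rw [iteratedDeriv_const_mul_field, iteratedDeriv_comp_const_mul
          (differentiable_cons hf fun ν => torusPow t (w ν.succ) * y ν).contDiff] at h
        beta_reduce at h
        rw [mul_zero, ← torusPow_mul_torusPow_sub t (w 0) τ k, mul_assoc] at h
        exact mul_left_cancel₀ (pow_ne_zero k (torusPow_ne_zero t (w 0))) h
    -- If `k` is not the first entry of a multi-index of weight `τ`, then `c k` lies in the span of
    -- the empty set.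
    have hc_zero : ∀ k ∉ hS.toFinset.image fun α => α 0, c k = 0 := by
      intro k hk
      have hempty : weightMonomials (fun ν => w ν.succ) (fun i => τ i - k * w 0 i) = ∅ := by
        refine Set.eq_empty_of_forall_notMem ?_
        rintro _ ⟨β, hβ, -⟩
        refine hk (Finset.mem_image.2 ⟨Fin.cons k β, ?_, rfl⟩)
        exact hS.mem_toFinset.2 ((cons_mem_weightSet w τ k β).2 hβ)
      simpa [hempty] using hc_span k
    -- The Taylor series in the first variable, in which only the exponents occurring in the finite
    -- set `weightSet w τ` contribute.
    have hsum : f = ∑ k ∈ hS.toFinset.image (fun α => α 0),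
        (k.factorial : ℂ)⁻¹ • fun z : Fin (d + 1) → ℂ => z 0 ^ k * c k (Fin.tail z) := by
      funext z
      have h := Complex.hasSum_taylorSeries_of_entire (differentiable_cons hf (Fin.tail z)) 0 (z 0)
      rw [Fin.cons_self_tail] at h
      rw [← h.tsum_eq, tsum_eq_sum (s := hS.toFinset.image fun α => α 0), Finset.sum_apply]
      · simp [hc]
      · intro k hk
        have := congrFun (hc_zero k hk) (Fin.tail z)
        simp only [hc, Pi.zero_apply] at this
        simp [this]
    rw [hsum]
    exact Submodule.sum_mem _ fun k _ =>
      Submodule.smul_mem _ _ (pow_mul_mem_span w τ k (hc_span k))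

theorem linearIndependent_monomials (d : ℕ) :
    LinearIndependent ℂ fun (α : Fin d → ℕ) (z : Fin d → ℂ) => ∏ ν, z ν ^ α ν := by
  let Φ : MvPolynomial (Fin d) ℂ →ₗ[ℂ] ((Fin d → ℂ) → ℂ) :=
    LinearMap.pi fun z => (MvPolynomial.aeval z).toLinearMap
  have hΦ : LinearMap.ker Φ = ⊥ := LinearMap.ker_eq_bot.2 fun p q h =>
    MvPolynomial.funext fun z => by simpa [Φ, MvPolynomial.aeval_eq_eval] using congrFun h z
  have h := ((MvPolynomial.basisMonomials (Fin d) ℂ).linearIndependent.map' Φ hΦ).comp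
    _ Finsupp.equivFunOnFinite.symm.injective
  have hv : (fun (α : Fin d → ℕ) (z : Fin d → ℂ) => ∏ ν, z ν ^ α ν) =
      (Φ ∘ MvPolynomial.basisMonomials (Fin d) ℂ) ∘ Finsupp.equivFunOnFinite.symm := by
    funext α z
    simp [Φ, MvPolynomial.aeval_monomial, Finsupp.prod_fintype]
  rw [hv]
  exact h

theorem equivariant_of_mem_span {d n : ℕ} {w : Fin d → Fin n → ℤ} {τ : Fin n → ℤ}
    {f : (Fin d → ℂ) → ℂ} (hf : f ∈ Submodule.span ℂ (weightMonomials w τ)) :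
    Differentiable ℂ f ∧ ∀ (t : Fin n → ℂˣ) (z : Fin d → ℂ),
      f (fun ν => torusPow t (w ν) * z ν) = torusPow t τ * f z := by
  induction hf using Submodule.span_induction with
  | mem g hg =>
    obtain ⟨α, hα, rfl⟩ := hg
    refine ⟨by fun_prop, fun t z => ?_⟩
    simp only [mul_pow, Finset.prod_mul_distrib, prod_torusPow_pow]
    rw [show (fun i => ∑ ν, (α ν : ℤ) * w ν i) = τ from funext hα]
  | zero => exact ⟨differentiable_const 0, by simp⟩
  | add g h _ _ ihg ihh =>
    exact ⟨ihg.1.add ihh.1, fun t z => by simp [ihg.2, ihh.2, mul_add]⟩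
  | smul c g _ ih =>
    exact ⟨ih.1.const_smul c, fun t z => by simp [ih.2, mul_left_comm]⟩

theorem finrank_span_weightMonomials {d n : ℕ} (w : Fin d → Fin n → ℤ) (τ : Fin n → ℤ)
    (hS : (weightSet w τ).Finite) :
    Module.finrank ℂ (Submodule.span ℂ (weightMonomials w τ)) = Nat.card (weightSet w τ) := by
  have := hS.fintype
  have hrange : weightMonomials w τ =
      Set.range fun (α : weightSet w τ) (z : Fin d → ℂ) => ∏ ν, z ν ^ (α : Fin d → ℕ) ν := by
    ext g
    simp [weightMonomials, eq_comm]
  rw [hrange, Nat.card_eq_fintype_card]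
  exact finrank_span_eq_card ((linearIndependent_monomials d).comp _ Subtype.val_injective)

/-- (a) Every entire function `f : ℂ^d → ℂ` satisfying
`f(t^{w₁}z₁, …, t^{w_d}z_d) = t^τ f(z)` for all `t ∈ (ℂ^×)^n` is a `ℂ`-linear
combination of the monomials `z^α` with `∑ ν, α_ν w_ν = τ`; (b) the space of all
such entire functions has dimension the number of such multi-indices `α`. -/
theorem equivariant_entire_functions (d n : ℕ) (w : Fin d → Fin n → ℤ) (τ : Fin n → ℤ)
    (hS : {α : Fin d → ℕ | ∀ i, ∑ ν, (α ν : ℤ) * w ν i = τ i}.Finite) :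
    (∀ f : (Fin d → ℂ) → ℂ, Differentiable ℂ f →
      (∀ (t : Fin n → ℂˣ) (z : Fin d → ℂ),
        f (fun ν => torusPow t (w ν) * z ν) = torusPow t τ * f z) →
      f ∈ Submodule.span ℂ
        {g : (Fin d → ℂ) → ℂ |
          ∃ α ∈ {α : Fin d → ℕ | ∀ i, ∑ ν, (α ν : ℤ) * w ν i = τ i},
            g = fun z => ∏ ν, z ν ^ α ν}) ∧
    (∃ W : Submodule ℂ ((Fin d → ℂ) → ℂ),
      (∀ f : (Fin d → ℂ) → ℂ,
        f ∈ W ↔ Differentiable ℂ f ∧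
          ∀ (t : Fin n → ℂˣ) (z : Fin d → ℂ),
            f (fun ν => torusPow t (w ν) * z ν) = torusPow t τ * f z) ∧
      Module.finrank ℂ W
        = Nat.card {α : Fin d → ℕ | ∀ i, ∑ ν, (α ν : ℤ) * w ν i = τ i}) := by
  have ha := fun f (hf : Differentiable ℂ f) => mem_span_of_equivariant w τ hS (f := f) hf
  exact ⟨ha, Submodule.span ℂ (weightMonomials w τ),
    fun f => ⟨equivariant_of_mem_span, fun h => ha f h.1 h.2⟩,
    finrank_span_weightMonomials w τ hS⟩
end

section
/- Let N be a finitely generated ℤ-module, β : ℤ^d → N a surjective ℤ-module homomorphism with kernel K := ker β ⊆ ℤ^d, and c ∈ ℤ^d. Set b_ν := β(e_ν) ⊗ 1 ∈ N ⊗_ℤ ℝ and Δ := {η ∈ (N ⊗_ℤ ℝ)^∨ : ⟨η, b_ν⟩ ≥ −c_ν for all ν = 1, …, d}. Then the map η ↦ (⟨η, b₁⟩ + c₁, …, ⟨η, b_d⟩ + c_d) restricts to a bijection from Δ ∩ N^∨ onto the set {α ∈ ℕ^d : ∑_{ν=1}^d k_ν α_ν = ∑_{ν=1}^d k_ν c_ν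 for every k ∈ K}. -/
/-!
A functional on `N` is determined by its values on the generators `β e_ν`, and since `N` is the
quotient of `ℤ^d` by `ker β`, a prescribed family of integers `a_ν` is realised by an integral
functional on `N` exactly when `∑ k_ν a_ν = 0` for all `k ∈ ker β`. Taking `a = α - c`, this is the
system of equations for `α`; the inequalities defining `Δ` say `α ≥ 0`. An integral functional
extends uniquely to a real one on `ℝ ⊗ N` because the pure tensors `1 ⊗ x` span over `ℝ`.
-/

open scoped TensorProduct BigOperators

theorem map_comp_eq_sum {d : ℕ} {N : Type*} [AddCommGroup N] [Module ℤ N]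
    (β : (Fin d → ℤ) →ₗ[ℤ] N) (φ : N →ₗ[ℤ] ℤ) (k : Fin d → ℤ) :
    φ (β k) = ∑ ν, k ν * φ (β (Pi.single ν 1)) := by
  have h := LinearMap.pi_apply_eq_sum_univ (φ ∘ₗ β) k
  simp only [LinearMap.comp_apply, smul_eq_mul] at h
  rw [h]
  refine Finset.sum_congr rfl fun ν _ => ?_
  congr 3
  ext j
  simp [Pi.single_apply, eq_comm]

/-- A functional on `ℤ^d` (given by its values `a` on the standard basis) that kills `ker β`
descends along the surjection `β`. -/
theorem exists_descend {d : ℕ} {N : Type*} [AddCommGroup N] [Module ℤ N]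
    (β : (Fin d → ℤ) →ₗ[ℤ] N) (hβ : Function.Surjective β) (a : Fin d → ℤ)
    (h : ∀ k, β k = 0 → ∑ ν, k ν * a ν = 0) :
    ∃ φ : N →ₗ[ℤ] ℤ, ∀ ν, φ (β (Pi.single ν 1)) = a ν := by
  let ψ : (Fin d → ℤ) →ₗ[ℤ] ℤ := ∑ ν, (LinearMap.proj ν : (Fin d → ℤ) →ₗ[ℤ] ℤ).smulRight (a ν)
  have hψ : ∀ k, ψ k = ∑ ν, k ν * a ν := fun k => by simp [ψ]
  have hk : LinearMap.ker β ≤ LinearMap.ker ψ := fun k hk => by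
    rw [LinearMap.mem_ker, hψ]
    exact h k hk
  refine ⟨(LinearMap.ker β).liftQ ψ hk ∘ₗ (β.quotKerEquivOfSurjective hβ).symm.toLinearMap,
    fun ν => ?_⟩
  have e : (β.quotKerEquivOfSurjective hβ).symm (β (Pi.single ν 1)) =
      (LinearMap.ker β).mkQ (Pi.single ν 1) := by
    rw [LinearEquiv.symm_apply_eq]
    rfl
  simp only [LinearMap.comp_apply, LinearEquiv.coe_coe, e, Submodule.mkQ_apply,
    Submodule.liftQ_apply, hψ]
  simp [Pi.single_apply]

theorem exists_real_extension {N : Type*} [AddCommGroup N] [Module ℤ N] (φ : N →ₗ[ℤ] ℤ) :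
    ∃ η : Module.Dual ℝ (ℝ ⊗[ℤ] N), ∀ x : N, η ((1 : ℝ) ⊗ₜ[ℤ] x) = (φ x : ℝ) :=
  ⟨(TensorProduct.AlgebraTensorModule.rid ℤ ℝ ℝ).toLinearMap ∘ₗ φ.baseChange ℝ,
    fun x => by simp⟩

/-- A functional on `ℝ ⊗ N` is determined by its values on `1 ⊗ β e_ν`. -/
theorem dual_ext {d : ℕ} {N : Type*} [AddCommGroup N] [Module ℤ N]
    (β : (Fin d → ℤ) →ₗ[ℤ] N) (hβ : Function.Surjective β) (η η' : Module.Dual ℝ (ℝ ⊗[ℤ] N))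
    (h : ∀ ν, η ((1 : ℝ) ⊗ₜ[ℤ] β (Pi.single ν 1)) = η' ((1 : ℝ) ⊗ₜ[ℤ] β (Pi.single ν 1))) :
    η = η' := by
  let r : Module.Dual ℝ (ℝ ⊗[ℤ] N) → ((Fin d → ℤ) →ₗ[ℤ] ℝ) := fun θ =>
    θ.restrictScalars ℤ ∘ₗ TensorProduct.mk ℤ ℝ N 1 ∘ₗ β
  have hr : r η = r η' := by
    refine (Pi.basisFun ℤ (Fin d)).ext fun ν => ?_
    rw [Pi.basisFun_apply]
    exact h ν
  refine TensorProduct.AlgebraTensorModule.ext fun t x => ?_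
  obtain ⟨k, rfl⟩ := hβ x
  have e : t ⊗ₜ[ℤ] β k = t • ((1 : ℝ) ⊗ₜ[ℤ] β k) := by simp [TensorProduct.smul_tmul']
  rw [e, map_smul, map_smul]
  exact congrArg (t • ·) (LinearMap.congr_fun hr k)

/-- For a surjective `β : ℤ^d → N` with kernel `K` and `c ∈ ℤ^d`, the map
`η ↦ (⟨η, b_ν⟩ + c_ν)_ν` restricts to a bijection from `Δ ∩ N^∨` onto
`{α ∈ ℕ^d | ∑ k_ν α_ν = ∑ k_ν c_ν for all k ∈ K}`. -/
theorem lattice_points_correspondence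
    (d : ℕ) (N : Type*) [AddCommGroup N] [Module ℤ N] [Module.Finite ℤ N]
    (β : (Fin d → ℤ) →ₗ[ℤ] N) (hβ : Function.Surjective β) (c : Fin d → ℤ)
    (b : Fin d → ℝ ⊗[ℤ] N)
    (hb : ∀ ν, b ν = (1 : ℝ) ⊗ₜ[ℤ] β (Pi.single ν 1))
    (Δ : Set (Module.Dual ℝ (ℝ ⊗[ℤ] N)))
    (hΔ : Δ = {η | ∀ ν, η (b ν) ≥ -(c ν : ℝ)}) :
    Set.BijOn (fun η : Module.Dual ℝ (ℝ ⊗[ℤ] N) => fun ν => η (b ν) + (c ν : ℝ))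
      (Δ ∩ {η | ∃ φ : N →ₗ[ℤ] ℤ, ∀ x : N, η ((1 : ℝ) ⊗ₜ[ℤ] x) = (φ x : ℝ)})
      ((fun α : Fin d → ℕ => fun ν => (α ν : ℝ)) ''
        {α : Fin d → ℕ | ∀ k : Fin d → ℤ, β k = 0 →
          ∑ ν, k ν * (α ν : ℤ) = ∑ ν, k ν * c ν}) := by
  subst hΔ
  refine ⟨?_, ?_, ?_⟩
  · rintro η ⟨hη, φ, hφ⟩
    have hv : ∀ ν, η (b ν) = (φ (β (Pi.single ν 1)) : ℝ) := fun ν => by rw [hb, hφ]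
    have hnn : ∀ ν, 0 ≤ φ (β (Pi.single ν 1)) + c ν := fun ν => by
      have h1 : η (b ν) ≥ -(c ν : ℝ) := hη ν
      rw [hv] at h1
      have h2 : (0 : ℝ) ≤ ((φ (β (Pi.single ν 1)) + c ν : ℤ) : ℝ) := by push_cast; linarith
      exact_mod_cast h2
    refine ⟨fun ν => (φ (β (Pi.single ν 1)) + c ν).toNat, fun k hk => ?_, ?_⟩
    · have h0 := map_comp_eq_sum β φ k
      rw [hk, map_zero] at h0
      simp only [Int.toNat_of_nonneg (hnn _), mul_add, Finset.sum_add_distrib, ← h0, zero_add]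
    · funext ν
      have h3 : (((φ (β (Pi.single ν 1)) + c ν).toNat : ℤ) : ℝ) =
          ((φ (β (Pi.single ν 1)) + c ν : ℤ) : ℝ) := by rw [Int.toNat_of_nonneg (hnn ν)]
      simp only [hv]
      push_cast at h3 ⊢
      exact_mod_cast h3
  · intro η _ η' _ h
    refine dual_ext β hβ η η' fun ν => ?_
    have := congrFun h ν
    simpa [hb] using this
  · rintro _ ⟨α, hα, rfl⟩
    obtain ⟨φ, hφ⟩ := exists_descend β hβ (fun ν => (α ν : ℤ) - c ν) fun k hk => by
      simp only [mul_sub, Finset.sum_sub_distrib, hα k hk, sub_self]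
    obtain ⟨η, hη⟩ := exists_real_extension φ
    have hv : ∀ ν, η (b ν) = (α ν : ℝ) - c ν := fun ν => by
      rw [hb, hη, hφ]
      push_cast
      rfl
    refine ⟨η, ⟨fun ν => ?_, φ, hη⟩, ?_⟩
    · rw [hv]
      have : (0 : ℝ) ≤ α ν := Nat.cast_nonneg _
      linarith
    · funext ν
      simp only [hv, sub_add_cancel]
end

section
/- Let N be a finitely generated ℤ-module, β : ℤ^d → N a surjective ℤ-module homomorphism with kernel K := ker β ⊆ ℤ^d, and c ∈ ℤ^d. Set b_ν := β(e_ν) ⊗ 1 ∈ N ⊗_ℤ ℝ and Δ := {η ∈ (N ⊗_ℤ ℝ)^∨ : ⟨η, b_ν⟩ ≥ −c_ν for all ν = 1, …, d}, and assume Δ is compact. Let K^∨ := Hom_ℤ(K, ℤ), let r_ν ∈ K^∨ be the functional k ↦ k_ν (the ν-th coordinate of k ∈ K ⊆ ℤ^d), and let r_c ∈ K^∨ be the functional k ↦ ∑_{ν=1}^d c_ν k_ν. Then the ℂ-vector space of entire functions f : ℂ^d → ℂ satisfying f(χ(r₁)·z₁, …, χ(r_d)·z_d) = χ(r_c)·f(z)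 for every group homomorphism χ : (K^∨, +) → (ℂ^×, ×) and every z ∈ ℂ^d, is finite-dimensional of dimension equal to the cardinality of Δ ∩ N^∨. -/
/-!
Write `K = ker β`. A monomial `z ^ m` is equivariant exactly when `∏ χ(r_ν) ^ m_ν = χ(r_c)` for all
characters `χ` of `K^∨`. Characters separate the points of `K^∨`, so this says
`∑ m_ν r_ν = r_c`, i.e. `m - c` kills `K`, i.e. `m - c` descends along the surjection `β` to some
`φ : N → ℤ` with `φ (β e_ν) = m_ν - c_ν`. The condition `m_ν ≥ 0` is then `⟨φ, b_ν⟩ ≥ -c_ν`. Hence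
`η ↦ (⟨η, b_ν⟩ + c_ν)_ν` is a bijection from `Δ ∩ N^∨` onto the set `S` of equivariant exponents,
and compactness of `Δ` makes `S` finite.

It remains to see that the equivariant entire functions are the span of the monomials with exponent
in `S` (`mem_span_monomialFun_iff`); monomials are linearly independent, being distinct characters of
the multiplicative monoid `ℂ^d`. The proof is by induction on `d`. Expanding in the first variable,
`f(z) = ∑ z₀ ^ n g_n(z')`, each coefficient `g_n` is entire (Cauchy's formula and differentiation
under the integral sign) and equivariant with shifted weights, so by induction it lies in the span of
the monomials `z' ^ m'` with `(n, m') ∈ S`. As `S` is finite, `g_n = 0` for large `n` and the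
expansion is a finite sum.
-/

open scoped TensorProduct BigOperators
open MeasureTheory Metric

/-! ### Entire functions of several variables -/

/-- Cauchy estimate for the Fréchet derivative, from the one-variable estimate along complex lines. -/
theorem norm_fderiv_le_of_norm_le_closedBall {E : Type*} [NormedAddCommGroup E] [NormedSpace ℂ E]
    {g : E → ℂ} (hg : Differentiable ℂ g) {x : E} {C : ℝ}
    (hC : ∀ y ∈ closedBall x 1, ‖g y‖ ≤ C) : ‖fderiv ℂ g x‖ ≤ C := by
  have hC0 : 0 ≤ C := (norm_nonneg _).trans (hC x (mem_closedBall_self zero_le_one))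
  refine ContinuousLinearMap.opNorm_le_bound _ hC0 fun v => ?_
  rcases eq_or_ne v 0 with rfl | hv
  · simp
  have hv' : 0 < ‖v‖ := norm_pos_iff.mpr hv
  have hline : Differentiable ℂ fun ζ : ℂ => x + ζ • v := by fun_prop
  have hd : HasDerivAt (fun ζ : ℂ => g (x + ζ • v)) (fderiv ℂ g x v) 0 := by
    have h1 : HasDerivAt (fun ζ : ℂ => x + ζ • v) v 0 := by
      simpa using ((hasDerivAt_id (0 : ℂ)).smul_const v).const_add x
    have h2 : HasFDerivAt g (fderiv ℂ g x) (x + (0 : ℂ) • v) := by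
      simpa using (hg x).hasFDerivAt
    exact h2.comp_hasDerivAt (0 : ℂ) h1
  have hb := Complex.norm_deriv_le_of_forall_mem_sphere_norm_le (c := 0) (R := ‖v‖⁻¹) (C := C)
    (inv_pos.mpr hv') (hg.comp hline).diffContOnCl (fun ζ hζ => by
      refine hC _ ?_
      have : ‖ζ‖ = ‖v‖⁻¹ := by simpa using hζ
      simp [norm_smul, this, hv'.ne'])
  have : deriv (g ∘ fun ζ : ℂ => x + ζ • v) 0 = fderiv ℂ g x v := hd.deriv
  rw [this] at hb
  simpa [div_eq_mul_inv] using hb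

/-- Differentiation under the integral sign for holomorphic integrands: joint continuity of `F`
suffices, because the Cauchy estimate turns a local bound on `F` into one on its derivative. -/
theorem differentiable_intervalIntegral_param {d : ℕ} {F : (Fin d → ℂ) → ℝ → ℂ} {a b : ℝ}
    (hF : Continuous F.uncurry) (hd : ∀ t, Differentiable ℂ fun x => F x t) :
    Differentiable ℂ fun x => ∫ t in a..b, F x t := by
  intro x₀
  obtain ⟨C, hC⟩ := ((isCompact_closedBall x₀ 2).prod
    (isCompact_uIcc (a := a) (b := b))).exists_bound_of_continuousOn hF.continuousOn
  have hcont : ∀ x, Continuous (F x) := fun x => hF.comp (Continuous.prodMk_right x)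
  have hmeas : Measurable fun t => fderiv ℂ (fun x => F x t) x₀ := by
    have : Continuous (fun t x => F x t : ℝ → (Fin d → ℂ) → ℂ).uncurry :=
      hF.comp continuous_swap
    exact (measurable_fderiv_with_param ℂ this).comp (measurable_id.prodMk measurable_const)
  refine (intervalIntegral.hasFDerivAt_integral_of_dominated_of_fderiv_le (𝕜 := ℂ)
    (F' := fun x t => fderiv ℂ (fun x => F x t) x) (bound := fun _ => C)
    (ball_mem_nhds x₀ one_pos) (.of_forall fun x => (hcont x).aestronglyMeasurable)
    ((hcont x₀).intervalIntegrable _ _) hmeas.aestronglyMeasurable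
    (.of_forall fun t ht x hx => ?_) (by simp)
    (.of_forall fun t _ x _ => (hd t x).hasFDerivAt)).differentiableAt
  refine norm_fderiv_le_of_norm_le_closedBall (hd t) fun y hy => ?_
  refine hC (y, t) ⟨?_, Set.uIoc_subset_uIcc ht⟩
  simp only [mem_ball, mem_closedBall] at *
  linarith [dist_triangle y x x₀]

theorem differentiable_cons_s7 {d : ℕ} :
    Differentiable ℂ fun p : ℂ × (Fin d → ℂ) => (Fin.cons p.1 p.2 : Fin (d + 1) → ℂ) :=
  differentiable_finCons.mpr ⟨differentiable_fst, differentiable_snd⟩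

/-- The coefficient of `z₀ ^ n` in the Taylor expansion of `f` at `z₀ = 0`, as a function of the
remaining variables. -/
noncomputable def taylorCoeff {d : ℕ} (f : (Fin (d + 1) → ℂ) → ℂ) (n : ℕ) (z : Fin d → ℂ) : ℂ :=
  (n.factorial : ℂ)⁻¹ * iteratedDeriv n (fun w : ℂ => f (Fin.cons w z)) 0

theorem differentiable_slice {d : ℕ} {f : (Fin (d + 1) → ℂ) → ℂ} (hf : Differentiable ℂ f)
    (z : Fin d → ℂ) : Differentiable ℂ fun w : ℂ => f (Fin.cons w z) :=
  hf.comp (differentiable_cons_s7.comp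
    (differentiable_id.prodMk (differentiable_const z)))

/-- Cauchy's integral formula writes the coefficient as a parametric integral over the unit circle. -/
theorem differentiable_taylorCoeff {d : ℕ} {f : (Fin (d + 1) → ℂ) → ℂ} (hf : Differentiable ℂ f)
    (n : ℕ) : Differentiable ℂ (taylorCoeff f n) := by
  have key : ∀ z, iteratedDeriv n (fun w : ℂ => f (Fin.cons w z)) 0 =
      (2 * Real.pi * Complex.I / n.factorial)⁻¹ * ∫ θ in (0 : ℝ)..2 * Real.pi,
        deriv (circleMap 0 1) θ • ((1 / (circleMap 0 1 θ - 0) ^ (n + 1)) •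
          f (Fin.cons (circleMap 0 1 θ) z)) := by
    intro z
    have h := (differentiable_slice hf z).differentiableOn (s := closedBall 0 1)
      |>.circleIntegral_one_div_sub_center_pow_smul one_pos n
    rw [circleIntegral] at h
    rw [h, smul_eq_mul, inv_mul_cancel_left₀]
    have := Complex.two_pi_I_ne_zero
    have := n.factorial_ne_zero
    positivity
  unfold taylorCoeff
  simp_rw [key]
  refine ((differentiable_intervalIntegral_param ?_ fun t => ?_).const_mul _).const_mul _
  · have h0 : ∀ θ, circleMap (0 : ℂ) 1 θ ≠ 0 := fun θ => circleMap_ne_center one_ne_zero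
    have h1 : Continuous fun p : (Fin d → ℂ) × ℝ =>
        f (Fin.cons (circleMap 0 1 p.2) p.1) :=
      hf.continuous.comp (differentiable_cons_s7.continuous.comp
        (((continuous_circleMap 0 1).comp continuous_snd).prodMk continuous_fst))
    simp only [deriv_circleMap, sub_zero, smul_eq_mul, Function.uncurry_def]
    have h2 := (continuous_circleMap 0 1).comp (continuous_snd (X := Fin d → ℂ) (Y := ℝ))
    refine (h2.mul continuous_const).mul (Continuous.mul ?_ h1)
    exact continuous_const.div (h2.pow _) fun p => pow_ne_zero _ (h0 _)
  · refine Differentiable.fun_const_smul (Differentiable.fun_const_smul ?_ _) _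
    exact hf.comp (differentiable_cons_s7.comp
      ((differentiable_const _).prodMk differentiable_id))

theorem hasSum_taylorCoeff {d : ℕ} {f : (Fin (d + 1) → ℂ) → ℂ} (hf : Differentiable ℂ f)
    (z : Fin (d + 1) → ℂ) :
    HasSum (fun n => z 0 ^ n * taylorCoeff f n (Fin.tail z)) (f z) := by
  have h := Complex.hasSum_taylorSeries_of_entire (differentiable_slice hf (Fin.tail z)) 0 (z 0)
  simp only [Fin.cons_self_tail, sub_zero, smul_eq_mul] at h
  have h' : (fun n => z 0 ^ n * taylorCoeff f n (Fin.tail z)) = fun n : ℕ =>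
      (n.factorial : ℂ)⁻¹ * (z 0 ^ n *
        iteratedDeriv n (fun w : ℂ => f (Fin.cons w (Fin.tail z))) 0) := by
    funext n
    unfold taylorCoeff; ring
  rwa [h']

theorem taylorCoeff_equivariant {d : ℕ} {f : (Fin (d + 1) → ℂ) → ℂ} (hf : Differentiable ℂ f)
    {t : Fin (d + 1) → ℂ} {l : ℂ} (ht : t 0 ≠ 0)
    (h : ∀ z, f (fun ν => t ν * z ν) = l * f z) (n : ℕ) (z : Fin d → ℂ) :
    taylorCoeff f n (fun ν => Fin.tail t ν * z ν) = l / t 0 ^ n * taylorCoeff f n z := by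
  have h1 : (fun w : ℂ => f (Fin.cons (t 0 * w) fun ν => Fin.tail t ν * z ν)) =
      fun w => l * f (Fin.cons w z) := by
    funext w
    rw [← h]
    congr 1
    funext ν
    refine Fin.cases ?_ (fun j => ?_) ν <;> simp [Fin.tail]
  have h2 := congrFun (iteratedDeriv_comp_const_mul (n := n)
    (differentiable_slice hf fun ν => Fin.tail t ν * z ν).contDiff (t 0)) 0
  rw [h1, iteratedDeriv_const_mul_field, mul_zero] at h2
  unfold taylorCoeff
  field_simp
  rw [h2, mul_comm]

/-! ### Equivariant entire functions are spanned by monomials -/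

/-- The monomial function `z ↦ ∏ z_ν ^ m_ν`. -/
def monomialFun {d : ℕ} (m : Fin d → ℕ) : (Fin d → ℂ) → ℂ := fun z => ∏ ν, z ν ^ m ν

/-- The exponents `m` whose monomial transforms with the factors `l i` under the diagonal
scalings `t i`. -/
def weightExponents {ι : Type*} {d : ℕ} (t : ι → Fin d → ℂ) (l : ι → ℂ) : Set (Fin d → ℕ) :=
  {m | ∀ i, ∏ ν, t i ν ^ m ν = l i}

/-- Only the finiteness of the exponent set enters; induction on `d` is over arbitrary families of
scalings `t` and factors `l`, since passing to a Taylor coefficient changes `l`. -/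
theorem mem_span_monomialFun {ι : Type*} {d : ℕ} {f : (Fin d → ℂ) → ℂ} (hf : Differentiable ℂ f)
    (t : ι → Fin d → ℂ) (l : ι → ℂ) (ht : ∀ i ν, t i ν ≠ 0)
    (h : ∀ i z, f (fun ν => t i ν * z ν) = l i * f z)
    (hS : (weightExponents t l).Finite) :
    f ∈ Submodule.span ℂ (monomialFun '' weightExponents t l) := by
  induction d generalizing l with
  | zero =>
    by_cases h0 : f 0 = 0
    · convert Submodule.zero_mem _
      funext z
      rw [Subsingleton.elim z 0, h0]; rfl
    have hl : ∀ i, l i = 1 := fun i => by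
      have := h i 0
      rw [Subsingleton.elim (fun ν => t i ν * (0 : Fin 0 → ℂ) ν) 0] at this
      exact (mul_eq_right₀ h0).mp this.symm
    have : f = f 0 • monomialFun 0 := by
      funext z
      simp [monomialFun, Subsingleton.elim z 0]
    rw [this]
    exact Submodule.smul_mem _ _ (Submodule.subset_span ⟨0, fun i => by simp [hl], rfl⟩)
  | succ d ih =>
    set S := weightExponents t l with hSdef
    -- the slice `{m' | (n, m') ∈ S}`, described by the weights of the `n`-th Taylor coefficient
    let T : ℕ → Set (Fin d → ℕ) := fun n =>
      weightExponents (fun i => Fin.tail (t i)) fun i => l i / t i 0 ^ n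
    have hT : ∀ n m, m ∈ T n ↔ (Fin.cons n m : Fin (d + 1) → ℕ) ∈ S := fun n m => by
      refine forall_congr' fun i => ?_
      rw [Fin.prod_univ_succ, eq_div_iff (pow_ne_zero _ (ht i 0)), mul_comm]
      simp [Fin.tail]
    have hmem : ∀ n, taylorCoeff f n ∈ Submodule.span ℂ (monomialFun '' T n) := fun n => by
      refine ih (differentiable_taylorCoeff hf n) (fun i => Fin.tail (t i))
        (fun i => l i / t i 0 ^ n) (fun i ν => ht i ν.succ)
        (fun i z => taylorCoeff_equivariant hf (ht i 0) (h i) n z) ?_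
      refine (hS.image Fin.tail).subset fun m hm => ⟨Fin.cons n m, (hT n m).mp hm, by simp⟩
    obtain ⟨M, hM⟩ := (hS.image fun m => m 0).bddAbove
    have hzero : ∀ n ∉ Finset.range (M + 1), taylorCoeff f n = 0 := fun n hn => by
      have hTn : T n = ∅ := Set.eq_empty_of_forall_notMem fun m hm => hn <| by
        have := hM ⟨_, (hT n m).mp hm, rfl⟩
        simp only [Fin.cons_zero] at this
        simp; omega
      simpa [hTn] using hmem n
    have hsum : f = ∑ n ∈ Finset.range (M + 1),
        fun z : Fin (d + 1) → ℂ => z 0 ^ n * taylorCoeff f n (Fin.tail z) := by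
      funext z
      rw [Finset.sum_apply]
      refine (hasSum_taylorCoeff hf z).unique (hasSum_sum_of_ne_finset_zero fun n hn => ?_)
      simp [hzero n hn]
    rw [hsum]
    refine Submodule.sum_mem _ fun n _ => ?_
    let L : ((Fin d → ℂ) → ℂ) →ₗ[ℂ] ((Fin (d + 1) → ℂ) → ℂ) :=
      { toFun := fun g z => z 0 ^ n * g (Fin.tail z)
        map_add' := fun g g' => by funext z; simp [mul_add]
        map_smul' := fun a g => by funext z; simp [mul_left_comm] }
    change L (taylorCoeff f n) ∈ _
    refine (Submodule.map_span_le L _ _).mpr ?_ (Submodule.mem_map_of_mem (hmem n))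
    rintro _ ⟨m, hm, rfl⟩
    refine Submodule.subset_span ⟨Fin.cons n m, (hT n m).mp hm, ?_⟩
    funext z
    simp [monomialFun, L, Fin.prod_univ_succ, Fin.tail]

theorem mem_span_monomialFun_iff {ι : Type*} {d : ℕ} {f : (Fin d → ℂ) → ℂ}
    (t : ι → Fin d → ℂ) (l : ι → ℂ) (ht : ∀ i ν, t i ν ≠ 0)
    (hS : (weightExponents t l).Finite) :
    f ∈ Submodule.span ℂ (monomialFun '' weightExponents t l) ↔
      Differentiable ℂ f ∧ ∀ i z, f (fun ν => t i ν * z ν) = l i * f z := by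
  refine ⟨fun hf => ?_, fun hf => mem_span_monomialFun hf.1 t l ht hf.2 hS⟩
  induction hf using Submodule.span_induction with
  | mem f hf =>
    obtain ⟨m, hm, rfl⟩ := hf
    refine ⟨by unfold monomialFun; fun_prop, fun i z => ?_⟩
    simp only [monomialFun, mul_pow, Finset.prod_mul_distrib, hm i]
  | zero => exact ⟨differentiable_const 0, by simp⟩
  | add f g _ _ hf hg =>
    exact ⟨hf.1.add hg.1, fun i z => by simp [hf.2 i z, hg.2 i z, mul_add]⟩
  | smul a f _ hf =>
    exact ⟨hf.1.const_smul a, fun i z => by simp [hf.2 i z, mul_left_comm]⟩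

/-- Dedekind's independence of characters; evaluation at the points `(1, …, 2, …, 1)` shows that the
monomials are distinct. -/
theorem linearIndependent_monomialFun (d : ℕ) :
    LinearIndependent ℂ (monomialFun : (Fin d → ℕ) → (Fin d → ℂ) → ℂ) := by
  let e : (Fin d → ℕ) → ((Fin d → ℂ) →* ℂ) := fun m =>
    { toFun := monomialFun m
      map_one' := by simp [monomialFun]
      map_mul' := fun x y => by simp [monomialFun, mul_pow, Finset.prod_mul_distrib] }
  have he : Function.Injective e := fun m m' hmm => by
    funext ν
    have h := DFunLike.congr_fun hmm (Function.update (1 : Fin d → ℂ) ν 2)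
    have h' : ∀ k : Fin d → ℕ, e k (Function.update (1 : Fin d → ℂ) ν 2) = 2 ^ k ν := fun k => by
      change ∏ μ, Function.update (1 : Fin d → ℂ) ν 2 μ ^ k μ = _
      rw [Finset.prod_eq_single ν] <;> simp +contextual [Function.update_of_ne]
    rw [h', h'] at h
    exact Nat.pow_right_injective le_rfl (by exact_mod_cast h)
  exact (linearIndependent_monoidHom (Fin d → ℂ) ℂ).comp e he

theorem finrank_span_monomialFun {d : ℕ} {S : Set (Fin d → ℕ)} (hS : S.Finite) :
    Module.finrank ℂ (Submodule.span ℂ (monomialFun '' S)) = S.ncard := by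
  have := hS.fintype
  have hli := (linearIndependent_monomialFun d).comp ((↑) : S → Fin d → ℕ) Subtype.val_injective
  have h := finrank_span_eq_card hli
  rw [Set.range_comp, Subtype.range_coe] at h
  rw [h, Set.ncard_eq_toFinset_card', Set.toFinset_card]

/-! ### Lattice points of `Δ` -/

/-- Characters of `Hom(K, ℤ)` separate points; those of the form `w ↦ 2 ^ w(k)` suffice. -/
theorem eq_zero_of_forall_addChar {K : Type*} [AddCommGroup K] (u : K →ₗ[ℤ] ℤ)
    (h : ∀ χ : AddChar (K →ₗ[ℤ] ℤ) ℂˣ, χ u = 1) : u = 0 := by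
  refine LinearMap.ext fun k => ?_
  let χ : AddChar (K →ₗ[ℤ] ℤ) ℂˣ :=
    { toFun := fun w => Units.mk0 (2 : ℂ) two_ne_zero ^ w k
      map_zero_eq_one' := by simp
      map_add_eq_mul' := fun v w => by simp [zpow_add] }
  have h1 : ((2 : ℂ) ^ u k) = 1 := by
    have := congrArg Units.val (h χ)
    simpa [χ] using this
  have h2 : (2 : ℝ) ^ u k = 1 := by
    have := congrArg norm h1
    rwa [norm_zpow, norm_one, Complex.norm_ofNat] at this
  simpa using (zpow_eq_one_iff_right₀ (by norm_num) (by norm_num)).mp h2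

theorem addChar_sum_nsmul {A ι : Type*} [AddCommMonoid A] [Fintype ι] (χ : AddChar A ℂˣ)
    (r : ι → A) (m : ι → ℕ) : χ (∑ ν, m ν • r ν) = ∏ ν, χ (r ν) ^ m ν := by
  have h := map_prod χ.toMonoidHom (fun ν => Multiplicative.ofAdd (m ν • r ν)) Finset.univ
  rw [← ofAdd_sum] at h
  refine h.trans (Finset.prod_congr rfl fun ν _ => ?_)
  exact χ.map_nsmul_eq_pow (m ν) (r ν)

/-- An integral functional on `ℤ^d` descends along the surjection `β` iff it kills `ker β`. -/
theorem exists_dual_iff {d : ℕ} {N : Type*} [AddCommGroup N] [Module ℤ N]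
    (β : (Fin d → ℤ) →ₗ[ℤ] N) (hβ : Function.Surjective β) (a : Fin d → ℤ) :
    (∃ φ : N →ₗ[ℤ] ℤ, ∀ ν, φ (β (Pi.single ν 1)) = a ν) ↔
      ∀ k ∈ LinearMap.ker β, ∑ ν, a ν * k ν = 0 := by
  constructor
  · rintro ⟨φ, hφ⟩ k hk
    have hk' : φ (β k) = 0 := by rw [LinearMap.mem_ker.mp hk, map_zero]
    rw [← hk', ← LinearMap.comp_apply, LinearMap.pi_apply_eq_sum_univ (φ ∘ₗ β) k]
    refine Finset.sum_congr rfl fun ν _ => ?_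
    have : (fun j => if ν = j then (1 : ℤ) else 0) = Pi.single ν 1 := by
      funext j; simp [Pi.single_apply, eq_comm]
    rw [this, LinearMap.comp_apply, hφ, smul_eq_mul, mul_comm]
  · intro h
    let ψ : (Fin d → ℤ) →ₗ[ℤ] ℤ := ∑ ν, a ν • LinearMap.proj ν
    have hψ : LinearMap.ker β ≤ LinearMap.ker ψ := fun k hk => by
      simpa [ψ] using h k hk
    refine ⟨(LinearMap.ker β).liftQ ψ hψ ∘ₗ
      (β.quotKerEquivOfSurjective hβ).symm.toLinearMap, fun ν => ?_⟩
    have : (β.quotKerEquivOfSurjective hβ).symm (β (Pi.single ν 1)) =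
        (LinearMap.ker β).mkQ (Pi.single ν 1) := by
      rw [LinearEquiv.symm_apply_eq]; rfl
    simp only [LinearMap.comp_apply, LinearEquiv.coe_coe, this, Submodule.mkQ_apply,
      Submodule.liftQ_apply]
    simp [ψ, Pi.single_apply]

theorem exists_realDual {N : Type*} [AddCommGroup N] [Module ℤ N] (φ : N →ₗ[ℤ] ℤ) :
    ∃ η : Module.Dual ℝ (ℝ ⊗[ℤ] N), ∀ x, η ((1 : ℝ) ⊗ₜ[ℤ] x) = (φ x : ℝ) := by
  refine ⟨(TensorProduct.AlgebraTensorModule.rid ℤ ℝ ℝ).toLinearMap ∘ₗ φ.baseChange ℝ,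
    fun x => ?_⟩
  simp

/-- A functional on `ℝ ⊗ N` is determined by its values on the vectors `b_ν`. -/
theorem realDual_ext {d : ℕ} {N : Type*} [AddCommGroup N] [Module ℤ N]
    {β : (Fin d → ℤ) →ₗ[ℤ] N} (hβ : Function.Surjective β)
    {η η' : Module.Dual ℝ (ℝ ⊗[ℤ] N)}
    (h : ∀ ν, η ((1 : ℝ) ⊗ₜ[ℤ] β (Pi.single ν 1)) = η' ((1 : ℝ) ⊗ₜ[ℤ] β (Pi.single ν 1))) :
    η = η' := by
  have key : ((η.restrictScalars ℤ) ∘ₗ TensorProduct.mk ℤ ℝ N 1) ∘ₗ β =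
      ((η'.restrictScalars ℤ) ∘ₗ TensorProduct.mk ℤ ℝ N 1) ∘ₗ β := by
    refine LinearMap.pi_ext' fun ν => LinearMap.ext_ring ?_
    simp only [LinearMap.comp_apply, LinearMap.coe_single]
    exact h ν
  refine TensorProduct.AlgebraTensorModule.ext fun a x => ?_
  obtain ⟨y, rfl⟩ := hβ x
  have h1 : η ((1 : ℝ) ⊗ₜ[ℤ] β y) = η' ((1 : ℝ) ⊗ₜ[ℤ] β y) := LinearMap.congr_fun key y
  have h2 : a ⊗ₜ[ℤ] β y = a • ((1 : ℝ) ⊗ₜ[ℤ] β y) := by simp [TensorProduct.smul_tmul']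
  rw [h2, map_smul, map_smul, h1]

/-! ### The dimension formula -/

/-- Concrete form of the main theorem (all `c_ν ∈ ℤ`): the space of entire functions
`f : ℂ^d → ℂ` that are equivariant of weight `r_c` for the torus `Hom(K^∨, ℂ^×)`
acting with weights `r_ν` is finite-dimensional, of dimension `#(Δ ∩ N^∨)`. -/
theorem quantisation_dimension_eq_lattice_points
    (d : ℕ) (N : Type*) [AddCommGroup N] [Module ℤ N] [Module.Finite ℤ N]
    (β : (Fin d → ℤ) →ₗ[ℤ] N) (hβ : Function.Surjective β) (c : Fin d → ℤ)
    (b : Fin d → ℝ ⊗[ℤ] N)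
    (hb : ∀ ν, b ν = (1 : ℝ) ⊗ₜ[ℤ] β (Pi.single ν 1))
    (Δ : Set (Module.Dual ℝ (ℝ ⊗[ℤ] N)))
    (hΔ : Δ = {η | ∀ ν, η (b ν) ≥ -(c ν : ℝ)})
    -- compactness of `Δ`, expressed via its image under the affine embedding
    -- `η ↦ (⟨η, b_ν⟩ + c_ν)_ν` into `ℝ^d` (a homeomorphism onto its image)
    (hcpt : IsCompact ((fun η : Module.Dual ℝ (ℝ ⊗[ℤ] N) =>
      fun ν => η (b ν) + (c ν : ℝ)) '' Δ))
    -- the coordinate functionals `r_ν : K^∨` and `r_c := ∑ ν, c_ν r_ν`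
    (r : Fin d → (↥(LinearMap.ker β) →ₗ[ℤ] ℤ))
    (hr : ∀ ν, r ν = (LinearMap.proj ν).comp (LinearMap.ker β).subtype)
    (rc : ↥(LinearMap.ker β) →ₗ[ℤ] ℤ)
    (hrc : rc = ∑ ν, c ν • r ν) :
    ∃ W : Submodule ℂ ((Fin d → ℂ) → ℂ),
      (∀ f : (Fin d → ℂ) → ℂ,
        f ∈ W ↔ Differentiable ℂ f ∧
          ∀ (χ : AddChar (↥(LinearMap.ker β) →ₗ[ℤ] ℤ) ℂˣ) (z : Fin d → ℂ),
            f (fun ν => (χ (r ν) : ℂ) * z ν) = (χ rc : ℂ) * f z) ∧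
      Module.Finite ℂ W ∧
      Module.finrank ℂ W =
        (Δ ∩ {η | ∃ φ : N →ₗ[ℤ] ℤ, ∀ x : N,
          η ((1 : ℝ) ⊗ₜ[ℤ] x) = (φ x : ℝ)}).ncard := by
  set S : Set (Fin d → ℕ) := weightExponents
    (fun (χ : AddChar (↥(LinearMap.ker β) →ₗ[ℤ] ℤ) ℂˣ) ν => (χ (r ν) : ℂ))
    (fun χ => (χ rc : ℂ)) with hSdef
  set P := Δ ∩ {η | ∃ φ : N →ₗ[ℤ] ℤ, ∀ x : N, η ((1 : ℝ) ⊗ₜ[ℤ] x) = (φ x : ℝ)} with hP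
  let Ψ : Module.Dual ℝ (ℝ ⊗[ℤ] N) → Fin d → ℝ := fun η ν => η (b ν) + (c ν : ℝ)
  let κ : (Fin d → ℕ) → Fin d → ℝ := fun m ν => (m ν : ℝ)
  have hκ : Function.Injective κ := fun m m' h => by
    funext ν; exact Nat.cast_injective (congrFun h ν)
  have hΨ : Function.Injective Ψ := fun η η' h => by
    refine realDual_ext hβ fun ν => ?_
    rw [← hb]
    exact add_right_cancel (congrFun h ν)
  -- the equivariant exponents are exactly the `m` for which `m - c` descends to `N`
  have hS : ∀ m, m ∈ S ↔ ∃ φ : N →ₗ[ℤ] ℤ, ∀ ν, φ (β (Pi.single ν 1)) = m ν - c ν := by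
    intro m
    have h1 : m ∈ S ↔ ∑ ν, m ν • r ν = rc := by
      have h2 : ∀ χ : AddChar (↥(LinearMap.ker β) →ₗ[ℤ] ℤ) ℂˣ,
          ∏ ν, (χ (r ν) : ℂ) ^ m ν = (χ rc : ℂ) ↔ χ (∑ ν, m ν • r ν) = χ rc := fun χ => by
        rw [addChar_sum_nsmul, ← Units.val_inj]; simp
      refine (forall_congr' h2).trans ⟨fun h => ?_, fun h χ => by rw [h]⟩
      refine sub_eq_zero.mp (eq_zero_of_forall_addChar _ fun χ => ?_)
      rw [AddChar.map_sub_eq_div, h χ, div_self']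
    rw [h1, exists_dual_iff β hβ, hrc, LinearMap.ext_iff]
    simp only [hr, Subtype.forall, LinearMap.sum_apply, LinearMap.smul_apply,
      LinearMap.comp_apply, LinearMap.proj_apply, Submodule.subtype_apply, sub_mul,
      Finset.sum_sub_distrib, sub_eq_zero, smul_eq_mul, nsmul_eq_mul]
  -- both sides of the bijection, viewed inside `ℝ^d`
  have hbij : κ '' S = Ψ '' P := by
    ext y
    constructor
    · rintro ⟨m, hm, rfl⟩
      obtain ⟨φ, hφ⟩ := (hS m).mp hm
      obtain ⟨η, hη⟩ := exists_realDual φ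
      have hηb : ∀ ν, η (b ν) = m ν - c ν := fun ν => by
        rw [hb, hη, hφ]; push_cast; rfl
      refine ⟨η, ⟨?_, φ, hη⟩, ?_⟩
      · rw [hΔ]
        intro ν
        rw [hηb]
        linarith [(m ν).cast_nonneg (α := ℝ)]
      · funext ν
        simp [Ψ, κ, hηb]
    · rintro ⟨η, ⟨hηΔ, φ, hη⟩, rfl⟩
      rw [hΔ] at hηΔ
      have hηb : ∀ ν, η (b ν) = φ (β (Pi.single ν 1)) := fun ν => by rw [hb, hη]
      have hnn : ∀ ν, 0 ≤ φ (β (Pi.single ν 1)) + c ν := fun ν => by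
        have := hηΔ ν
        rw [hηb] at this
        have h' : (0 : ℝ) ≤ φ (β (Pi.single ν 1)) + c ν := by linarith
        exact_mod_cast h'
      have hcast : ∀ ν, ((φ (β (Pi.single ν 1)) + c ν).toNat : ℤ) =
          φ (β (Pi.single ν 1)) + c ν := fun ν => Int.toNat_of_nonneg (hnn ν)
      refine ⟨fun ν => (φ (β (Pi.single ν 1)) + c ν).toNat, (hS _).mpr ⟨φ, fun ν => ?_⟩, ?_⟩
      · rw [hcast]; ring
      · funext ν
        simp only [κ, Ψ, hηb]
        exact_mod_cast hcast ν
  have hfin : S.Finite := by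
    obtain ⟨R, hR⟩ := hcpt.isBounded.exists_norm_le
    refine (Set.finite_Iic (fun _ : Fin d => ⌊R⌋₊)).subset fun m hm ν => Nat.le_floor ?_
    have h1 : κ m ∈ Ψ '' P := hbij ▸ Set.mem_image_of_mem κ hm
    have h2 := (norm_le_pi_norm (κ m) ν).trans
      (hR _ (Set.image_mono Set.inter_subset_left h1))
    simpa [κ] using h2
  have hcard : S.ncard = P.ncard := by
    rw [← Set.ncard_image_of_injective S hκ, hbij, Set.ncard_image_of_injective P hΨ]
  exact ⟨Submodule.span ℂ (monomialFun '' S),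
    fun f => mem_span_monomialFun_iff _ _ (fun χ ν => (χ (r ν)).ne_zero) hfin,
    Module.Finite.span_of_finite ℂ (hfin.image _),
    (finrank_span_monomialFun hfin).trans hcard⟩
end

section
/- Let b ≥ 1 and τ ≥ 0 be integers, and let ζ := exp(2πi/b) ∈ ℂ (a primitive b-th root of unity). Then for each k with 1 ≤ k ≤ b − 1 one has ζ^{k(b−1)} ≠ 1, and the identity (2τ + 1 + b)/(2b) + (1/b) ∑_{k=1}^{b−1} ζ^{kτ} / (1 − ζ^{k(b−1)}) = ⌊τ/b⌋ + 1 holds, where ⌊·⌋ denotes the floor function. -/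
/-!
The proof is by induction on `τ`. Put `w = ζ ^ k`, so that `ζ ^ (k * (b - 1)) = w⁻¹`, and let
`S τ = ∑ w ^ τ / (1 - w⁻¹)`, the sum running over the nontrivial `b`-th roots of unity `w`.

* Since `w ^ (τ + 1) / (1 - w⁻¹) - w ^ τ / (1 - w⁻¹) = w ^ (τ + 1)`, the difference
  `S (τ + 1) - S τ` is a sum of powers of roots of unity, equal to `b - 1` if `b ∣ τ + 1` and
  to `-1` otherwise (`sum_pow_nontrivial`). Hence the left-hand side grows by `1` exactly when
  `b ∣ τ + 1`, which is also how `⌊τ / b⌋` grows.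
* For `τ = 0`, pairing `w` with `w⁻¹` and using `1 / (1 - w) + 1 / (1 - w⁻¹) = 1` gives
  `2 * S 0 = b - 1` (`two_mul_sum_inv`).
-/

open Complex Real

lemma pow_mul_pow_pred {b : ℕ} {ζ : ℂ} (hb : 1 ≤ b) (h : IsPrimitiveRoot ζ b) (k : ℕ) :
    ζ ^ (k * (b - 1)) * ζ ^ k = 1 := by
  obtain ⟨m, rfl⟩ : ∃ m, b = m + 1 := ⟨b - 1, by omega⟩
  rw [← pow_add, Nat.add_sub_cancel, show k * m + k = (m + 1) * k by ring, pow_mul, h.pow_eq_one,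
    one_pow]

lemma pow_pred_ne_one {b : ℕ} {ζ : ℂ} (h : IsPrimitiveRoot ζ b) {k : ℕ}
    (hk : 1 ≤ k) (hkb : k ≤ b - 1) : ζ ^ (k * (b - 1)) ≠ 1 := by
  intro h1
  have h2 := pow_mul_pow_pred (by omega) h k
  rw [h1, one_mul] at h2
  exact h.pow_ne_one_of_pos_of_lt (by omega) (by omega) h2

lemma sum_pow_nontrivial {b : ℕ} {ζ : ℂ} (hb : 1 ≤ b) (h : IsPrimitiveRoot ζ b) (n : ℕ) :
    ∑ k ∈ Finset.Icc 1 (b - 1), ζ ^ (k * n) = (if b ∣ n then (b : ℂ) else 0) - 1 := by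
  have hI : Finset.Icc 1 (b - 1) = Finset.Ico 1 b := by
    ext; simp only [Finset.mem_Icc, Finset.mem_Ico]; omega
  have hs : ∑ k ∈ Finset.range b, (ζ ^ n) ^ k
      = 1 + ∑ k ∈ Finset.Icc 1 (b - 1), ζ ^ (k * n) := by
    rw [hI, Finset.range_eq_Ico, Finset.sum_eq_sum_Ico_succ_bot (by omega)]
    simp [← pow_mul, mul_comm]
  have hr : ∑ k ∈ Finset.range b, (ζ ^ n) ^ k = if b ∣ n then (b : ℂ) else 0 := by
    split_ifs with hd
    · simp [(h.pow_eq_one_iff_dvd n).2 hd]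
    · rw [geom_sum_eq (fun h1 => hd ((h.pow_eq_one_iff_dvd n).1 h1)), ← pow_mul, mul_comm n b,
        pow_mul, h.pow_eq_one]
      simp
  rw [← hr, hs]; ring

lemma two_mul_sum_inv {b : ℕ} {ζ : ℂ} (hb : 1 ≤ b) (h : IsPrimitiveRoot ζ b) :
    2 * ∑ k ∈ Finset.Icc 1 (b - 1), 1 / (1 - ζ ^ (k * (b - 1))) = (b : ℂ) - 1 := by
  have hrefl : ∑ k ∈ Finset.Icc 1 (b - 1), 1 / (1 - ζ ^ (k * (b - 1)))
      = ∑ k ∈ Finset.Icc 1 (b - 1), 1 / (1 - ζ ^ ((b - k) * (b - 1))) := by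
    refine Finset.sum_nbij' (fun k => b - k) (fun k => b - k) ?_ ?_ ?_ ?_ ?_ <;>
      intro k hk <;> rw [Finset.mem_Icc] at hk
    · simp only [Finset.mem_Icc]; omega
    · simp only [Finset.mem_Icc]; omega
    · omega
    · omega
    · simp only [show b - (b - k) = k by omega]
  rw [two_mul]
  nth_rewrite 2 [hrefl]
  rw [← Finset.sum_add_distrib]
  have hone : ∀ k ∈ Finset.Icc 1 (b - 1),
      1 / (1 - ζ ^ (k * (b - 1))) + 1 / (1 - ζ ^ ((b - k) * (b - 1))) = 1 := by
    intro k hk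
    rw [Finset.mem_Icc] at hk
    have h1 := pow_pred_ne_one h hk.1 hk.2
    have h2 := pow_pred_ne_one h (k := b - k) (by omega) (by omega)
    have h3 : ζ ^ (k * (b - 1)) * ζ ^ ((b - k) * (b - 1)) = 1 := by
      rw [← pow_add, ← add_mul, show k + (b - k) = b by omega, pow_mul, h.pow_eq_one, one_pow]
    have h1' := sub_ne_zero.2 h1.symm
    have h2' := sub_ne_zero.2 h2.symm
    rw [div_add_div _ _ h1' h2', div_eq_one_iff_eq (mul_ne_zero h1' h2')]
    linear_combination -h3
  rw [Finset.sum_congr rfl hone]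
  simp [Nat.cast_sub hb]

/-- The identity for an arbitrary primitive `b`-th root of unity. -/
lemma hrr_of_isPrimitiveRoot {b : ℕ} {ζ : ℂ} (hb : 1 ≤ b) (h : IsPrimitiveRoot ζ b) (τ : ℕ) :
    (2 * (τ : ℂ) + 1 + (b : ℂ)) / (2 * (b : ℂ)) +
      (1 / (b : ℂ)) * ∑ k ∈ Finset.Icc 1 (b - 1), ζ ^ (k * τ) / (1 - ζ ^ (k * (b - 1)))
    = ((τ / b : ℕ) : ℂ) + 1 := by
  have hb0 : (b : ℂ) ≠ 0 := by exact_mod_cast (by omega : b ≠ 0)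
  induction τ with
  | zero =>
    have h2 := two_mul_sum_inv hb h
    simp only [mul_zero, pow_zero, Nat.zero_div, Nat.cast_zero]
    field_simp
    linear_combination h2
  | succ τ ih =>
    have hstep : ∑ k ∈ Finset.Icc 1 (b - 1), ζ ^ (k * (τ + 1)) / (1 - ζ ^ (k * (b - 1)))
        = ∑ k ∈ Finset.Icc 1 (b - 1), ζ ^ (k * τ) / (1 - ζ ^ (k * (b - 1)))
          + ∑ k ∈ Finset.Icc 1 (b - 1), ζ ^ (k * (τ + 1)) := by
      rw [← Finset.sum_add_distrib]
      refine Finset.sum_congr rfl fun k hk => ?_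
      rw [Finset.mem_Icc] at hk
      have h1 := sub_ne_zero.2 (pow_pred_ne_one h hk.1 hk.2).symm
      have h2 := pow_mul_pow_pred hb h k
      rw [div_add' _ _ _ h1]
      congr 1
      rw [mul_add, mul_one, pow_add]
      linear_combination ζ ^ (k * τ) * h2
    have key : (1 / (b : ℂ)) * (if b ∣ τ + 1 then (b : ℂ) else 0)
        = if b ∣ τ + 1 then 1 else 0 := by
      split_ifs <;> simp [hb0]
    rw [hstep, sum_pow_nontrivial hb h, Nat.succ_div]
    push_cast
    rw [← key]
    have hsplit : (2 * ((τ : ℂ) + 1) + 1 + b) / (2 * b) = (2 * τ + 1 + b) / (2 * b) + 1 / b := by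
      field_simp; ring
    rw [hsplit]
    linear_combination ih

/-- The Hirzebruch–Riemann–Roch computation for `ℂP(1, b)`: with
`ζ = exp(2πi/b)`, for `1 ≤ k ≤ b - 1` one has `ζ^(k(b-1)) ≠ 1`, and
`(2τ + 1 + b)/(2b) + (1/b) ∑_{k=1}^{b-1} ζ^(kτ)/(1 - ζ^(k(b-1))) = ⌊τ/b⌋ + 1`. -/
theorem hrr_weighted_projective_line (b τ : ℕ) (hb : 1 ≤ b) :
    (∀ k : ℕ, 1 ≤ k → k ≤ b - 1 →
      Complex.exp (2 * (π : ℂ) * Complex.I / (b : ℂ)) ^ (k * (b - 1)) ≠ 1) ∧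
    (2 * (τ : ℂ) + 1 + (b : ℂ)) / (2 * (b : ℂ)) +
      (1 / (b : ℂ)) * ∑ k ∈ Finset.Icc 1 (b - 1),
        Complex.exp (2 * (π : ℂ) * Complex.I / (b : ℂ)) ^ (k * τ) /
          (1 - Complex.exp (2 * (π : ℂ) * Complex.I / (b : ℂ)) ^ (k * (b - 1)))
    = ((τ / b : ℕ) : ℂ) + 1 := by
  have h := Complex.isPrimitiveRoot_exp b (by omega)
  exact ⟨fun k hk hkb => pow_pred_ne_one h hk hkb, hrr_of_isPrimitiveRoot hb h τ⟩
end
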